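/- With coarse-grained variables defined by piecewise linear (hat-function) weighting over blocks of size $M$, the diagonal entry of the memory kernel at time zero satisfies $0 \leq \Theta_{0,0}(0) \leq \frac{2M\kappa_1 + 8M\kappa_2 - 6\kappa_2}{M(2M^2+1)/3}$; in particular $\Theta_{0,0}(0) = \mathcal{O}(M^{-2})$ as $M \to \infty$. -/

import Mathlib

open Matrix Complex Real

noncomputable def A0 (M : ℕ) (κ1 κ2 : ℝ) : Matrix (Fin M) (Fin M) ℂ := fun i j =>
  if (i : ℤ) = (j : ℤ) then 2 * ((κ1 : ℂ) + κ2)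
  else if |(i : ℤ) - (j : ℤ)| = 1 then -(κ1 : ℂ)
  else if |(i : ℤ) - (j : ℤ)| = 2 then -(κ2 : ℂ) else 0

noncomputable def A1 (M : ℕ) (κ1 κ2 : ℝ) : Matrix (Fin M) (Fin M) ℂ := fun i j =>
  if (i : ℕ) = 0 ∧ (j : ℕ) = M - 1 then -(κ1 : ℂ)
  else if ((i : ℕ) = 0 ∧ (j : ℕ) = M - 2) ∨ ((i : ℕ) = 1 ∧ (j : ℕ) = M - 1) then -(κ2 : ℂ)
  else 0

noncomputable def Ahat (M : ℕ) (κ1 κ2 ξ : ℝ) : Matrix (Fin M) (Fin M) ℂ :=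
  A0 M κ1 κ2 + Complex.exp (-(ξ : ℂ) * Complex.I) • A1 M κ1 κ2
    + Complex.exp ((ξ : ℂ) * Complex.I) • (A1 M κ1 κ2)ᵀ

noncomputable def q1 (M : ℕ) : Fin M → ℂ := fun _ => (1 / Real.sqrt M : ℝ)

noncomputable def cnorm (M : ℕ) : ℝ := Real.sqrt ((2 * M ^ 3 + M) / 3)

noncomputable def Phihat (M : ℕ) (ξ : ℝ) : Fin M → ℂ := fun k =>
  ((((k : ℕ) : ℝ) + 1) / cnorm M : ℝ) +
    Complex.exp (-(ξ : ℂ) * Complex.I) * (((M : ℝ) - 1 - ((k : ℕ) : ℝ)) / cnorm M : ℝ)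

open scoped ComplexOrder

/-- cyclic successor -/
def nxt {M : ℕ} (i : Fin M) : Fin M :=
  ⟨if (i : ℕ) + 1 < M then (i : ℕ) + 1 else 0, by have := i.2; split_ifs <;> omega⟩

/-- quasi-periodic phase -/
noncomputable def ph {M : ℕ} (z : ℂ) (i : Fin M) : ℂ := if (i : ℕ) + 1 < M then 1 else z

/-- quasi-periodic shift -/
noncomputable def Sh (M : ℕ) (z : ℂ) : Matrix (Fin M) (Fin M) ℂ := fun i j =>
  if j = nxt i then ph z i else 0

lemma Sh_mulVec (M : ℕ) (z : ℂ) (x : Fin M → ℂ) (i : Fin M) :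
    (Sh M z *ᵥ x) i = ph z i * x (nxt i) := by
  simp [Matrix.mulVec, dotProduct, Sh]

lemma Sh_mul (M : ℕ) (z : ℂ) (i j : Fin M) :
    (Sh M z * Sh M z) i j = if j = nxt (nxt i) then ph z i * ph z (nxt i) else 0 := by
  rw [Matrix.mul_apply]
  simp only [Sh, ite_mul, zero_mul, Finset.sum_ite_eq', Finset.mem_univ, if_true]
  simp only [mul_ite, mul_zero]

lemma nxt_inj {M : ℕ} (i j : Fin M) (h : nxt i = nxt j) : i = j := by
  simp only [nxt, Fin.mk.injEq] at h
  have := i.2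
  have := j.2
  ext
  split_ifs at h <;> omega

lemma Sh_unit (M : ℕ) (z : ℂ) (hz : z * star z = 1) : (Sh M z) * (Sh M z)ᴴ = 1 := by
  ext i j
  rw [Matrix.mul_apply]
  simp only [Sh, Matrix.conjTranspose_apply, ite_mul, zero_mul, Finset.sum_ite_eq',
    Finset.mem_univ, if_true, Finset.sum_ite_eq]
  by_cases h : i = j
  · subst h
    simp only [if_true, Matrix.one_apply_eq, ph]
    split_ifs
    · simp
    · exact hz
  · rw [if_neg (fun h' => h (nxt_inj _ _ h')), Matrix.one_apply_ne h]
    simp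

lemma Ahat_eq (M : ℕ) (hM : 5 ≤ M) (κ1 κ2 ξ : ℝ) :
    Ahat M κ1 κ2 ξ =
      (κ1 : ℂ) • (2 - Sh M (Complex.exp (ξ * Complex.I)) - (Sh M (Complex.exp (ξ * Complex.I)))ᴴ) +
      (κ2 : ℂ) • (2 - Sh M (Complex.exp (ξ * Complex.I)) * Sh M (Complex.exp (ξ * Complex.I))
        - (Sh M (Complex.exp (ξ * Complex.I)) * Sh M (Complex.exp (ξ * Complex.I)))ᴴ) := by
  have hs : star (Complex.exp (ξ * Complex.I)) = Complex.exp (-(ξ : ℂ) * Complex.I) := by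
    rw [Complex.star_def, ← Complex.exp_conj]; simp
  have h2 : ∀ i j : Fin M, (2 : Matrix (Fin M) (Fin M) ℂ) i j = if i = j then 2 else 0 := by
    intro i j
    rw [show (2 : Matrix (Fin M) (Fin M) ℂ) = (1 + 1) by norm_num]
    simp only [Matrix.add_apply, Matrix.one_apply]
    split_ifs <;> norm_num
  ext i j
  simp only [Ahat, Matrix.add_apply, Matrix.smul_apply, Matrix.sub_apply,
    Matrix.conjTranspose_apply, Sh_mul, h2, Matrix.transpose_apply, smul_eq_mul]
  rw [← hs]
  generalize Complex.exp (ξ * Complex.I) = z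
  obtain ⟨i, hi⟩ := i
  obtain ⟨j, hj⟩ := j
  have e0 : ((i : ℤ) = (j : ℤ)) ↔ i = j := by omega
  have e1 : (|(i : ℤ) - (j : ℤ)| = 1) ↔ (i = j + 1 ∨ j = i + 1) := by
    rw [abs_eq (by norm_num)]; omega
  have e2 : (|(i : ℤ) - (j : ℤ)| = 2) ↔ (i = j + 2 ∨ j = i + 2) := by
    rw [abs_eq (by norm_num)]; omega
  have key : ∀ a b : ℕ, (a < M) → (b < M) →
     (b = (if (if a + 1 < M then a + 1 else 0) + 1 < M then (if a + 1 < M then a + 1 else 0) + 1 else 0)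
       ↔ (b = a + 2 ∨ (a = M - 2 ∧ b = 0) ∨ (a = M - 1 ∧ b = 1))) := by
    intro a b ha hb
    split_ifs <;> omega
  have key1 : ∀ a b : ℕ, (a < M) → (b < M) →
     (b = (if a + 1 < M then a + 1 else 0)
       ↔ (b = a + 1 ∨ (a = M - 1 ∧ b = 0))) := by
    intro a b ha hb
    split_ifs <;> omega
  have S1 : ∀ (a b : ℕ) (ha : a < M) (hb : b < M), Sh M z ⟨a, ha⟩ ⟨b, hb⟩ =
      if b = a + 1 then 1 else if a = M - 1 ∧ b = 0 then z else 0 := by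
    intro a b ha hb
    simp only [Sh, nxt, ph, Fin.mk.injEq, key1 a b ha hb]
    split_ifs <;> first | rfl | omega
  have S2 : ∀ (a b : ℕ) (ha : a < M) (hb : b < M),
      (if (⟨b, hb⟩ : Fin M) = nxt (nxt ⟨a, ha⟩) then
        ph z (⟨a, ha⟩ : Fin M) * ph z (nxt (⟨a, ha⟩ : Fin M)) else 0) =
      if b = a + 2 then 1 else if (a = M - 2 ∧ b = 0) ∨ (a = M - 1 ∧ b = 1) then z else 0 := by
    intro a b ha hb
    simp only [nxt, ph, Fin.mk.injEq, key a b ha hb]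
    split_ifs <;> first | omega | simp
  rw [S1 i j hi hj, S1 j i hj hi, S2 i j hi hj, S2 j i hj hi]
  simp only [A0, A1, e0, e1, e2, Fin.mk.injEq]
  rcases lt_trichotomy i j with h | h | h
  · by_cases c1 : j = i + 1
    · simp (disch := omega) only [if_pos, if_neg, star_zero, star_one]; try ring
    · by_cases c2 : j = i + 2
      · simp (disch := omega) only [if_pos, if_neg, star_zero, star_one]; try ring
      · by_cases c3 : i = 0 ∧ j = M - 1
        · simp (disch := omega) only [if_pos, if_neg, star_zero, star_one]; try ring
        · by_cases c4 : (i = 0 ∧ j = M - 2) ∨ (i = 1 ∧ j = M - 1)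
          · simp (disch := omega) only [if_pos, if_neg, star_zero, star_one]; try ring
          · simp (disch := omega) only [if_pos, if_neg, star_zero, star_one]; try ring
  · simp (disch := omega) only [if_pos, if_neg, star_zero, star_one]; try ring
  · by_cases c1 : i = j + 1
    · simp (disch := omega) only [if_pos, if_neg, star_zero, star_one]; try ring
    · by_cases c2 : i = j + 2
      · simp (disch := omega) only [if_pos, if_neg, star_zero, star_one]; try ring
      · by_cases c3 : j = 0 ∧ i = M - 1
        · simp (disch := omega) only [if_pos, if_neg, star_zero, star_one]; try ring
        · by_cases c4 : (j = 0 ∧ i = M - 2) ∨ (j = 1 ∧ i = M - 1)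
          · simp (disch := omega) only [if_pos, if_neg, star_zero, star_one]; try ring
          · simp (disch := omega) only [if_pos, if_neg, star_zero, star_one]; try ring

lemma exp_unit (ξ : ℝ) : Complex.exp (ξ * Complex.I) * star (Complex.exp (ξ * Complex.I)) = 1 := by
  rw [Complex.star_def, ← Complex.exp_conj, ← Complex.exp_add]; simp

lemma Ahat_eq2 (M : ℕ) (hM : 5 ≤ M) (κ1 κ2 ξ : ℝ) (S : Matrix (Fin M) (Fin M) ℂ)
    (hS : S = Sh M (Complex.exp (ξ * Complex.I))) :
    Ahat M κ1 κ2 ξ = (κ1 : ℂ) • ((1 - S)ᴴ * (1 - S)) + (κ2 : ℂ) • ((1 - S * S)ᴴ * (1 - S * S)) := by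
  rw [Ahat_eq M hM, ← hS]
  have hu : S * Sᴴ = 1 := hS ▸ Sh_unit M _ (exp_unit ξ)
  have hu' : Sᴴ * S = 1 := mul_eq_one_comm.mp hu
  have h4 : Sᴴ * Sᴴ * (S * S) = 1 := by
    rw [Matrix.mul_assoc, ← Matrix.mul_assoc Sᴴ S S, hu', Matrix.one_mul, hu']
  congr 2
  · simp only [Matrix.conjTranspose_sub, Matrix.conjTranspose_one, Matrix.sub_mul, Matrix.mul_sub,
      hu', Matrix.one_mul, Matrix.mul_one]
    rw [← one_add_one_eq_two]; abel
  · simp only [Matrix.conjTranspose_sub, Matrix.conjTranspose_one, Matrix.sub_mul, Matrix.mul_sub,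
      Matrix.conjTranspose_mul, h4, Matrix.one_mul, Matrix.mul_one]
    rw [← one_add_one_eq_two]; abel

lemma Ahat_eq3 (M : ℕ) (hM : 5 ≤ M) (κ1 κ2 ξ : ℝ) (S : Matrix (Fin M) (Fin M) ℂ)
    (hS : S = Sh M (Complex.exp (ξ * Complex.I))) :
    Ahat M κ1 κ2 ξ = ((κ1 + 4 * κ2 : ℝ) : ℂ) • ((1 - S)ᴴ * (1 - S)) +
      ((-κ2 : ℝ) : ℂ) • ((2 - S - Sᴴ)ᴴ * (2 - S - Sᴴ)) := by
  rw [Ahat_eq M hM, ← hS]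
  have hu : S * Sᴴ = 1 := hS ▸ Sh_unit M _ (exp_unit ξ)
  have hu' : Sᴴ * S = 1 := mul_eq_one_comm.mp hu
  have h2 : (2 : Matrix (Fin M) (Fin M) ℂ)ᴴ = 2 := by
    rw [← one_add_one_eq_two]; simp
  have hL : (1 - S)ᴴ * (1 - S) = 2 - S - Sᴴ := by
    simp only [Matrix.conjTranspose_sub, Matrix.conjTranspose_one, Matrix.sub_mul, Matrix.mul_sub,
      hu', Matrix.one_mul, Matrix.mul_one]
    rw [← one_add_one_eq_two]; abel
  have h2' : (2 : Matrix (Fin M) (Fin M) ℂ) = (2 : ℂ) • 1 := by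
    rw [ofNat_smul_eq_nsmul]; simp
  have h6' : (6 : Matrix (Fin M) (Fin M) ℂ) = (6 : ℂ) • 1 := by
    rw [ofNat_smul_eq_nsmul]; simp
  have hL2 : (2 - S - Sᴴ)ᴴ * (2 - S - Sᴴ) = 6 - (4 : ℂ) • (S + Sᴴ) + S * S + Sᴴ * Sᴴ := by
    rw [Matrix.conjTranspose_sub, Matrix.conjTranspose_sub, Matrix.conjTranspose_conjTranspose, h2,
      h2', h6']
    simp only [Matrix.sub_mul, Matrix.mul_sub, hu, hu', Matrix.smul_mul, Matrix.mul_smul,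
      Matrix.one_mul, Matrix.mul_one]
    module
  rw [hL, hL2, Matrix.conjTranspose_mul]
  rw [h2', h6']
  push_cast
  module

lemma Ahat_psd (M : ℕ) (hM : 5 ≤ M) (κ1 κ2 ξ : ℝ) (h1 : 0 < κ1) (h2 : 0 < κ1 + 4 * κ2) :
    (Ahat M κ1 κ2 ξ).PosSemidef := by
  rcases le_total 0 κ2 with h | h
  · rw [Ahat_eq2 M hM κ1 κ2 ξ _ rfl]
    exact ((Matrix.posSemidef_conjTranspose_mul_self _).smul (by exact_mod_cast h1.le)).add
      ((Matrix.posSemidef_conjTranspose_mul_self _).smul (by exact_mod_cast h))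
  · rw [Ahat_eq3 M hM κ1 κ2 ξ _ rfl]
    exact ((Matrix.posSemidef_conjTranspose_mul_self _).smul (by exact_mod_cast h2.le)).add
      ((Matrix.posSemidef_conjTranspose_mul_self _).smul
        (by have : 0 ≤ -κ2 := by linarith
            exact_mod_cast this))

/-- abstract bracket bound -/
lemma bracket {n : ℕ} (A : Matrix (Fin n) (Fin n) ℂ) (hA : A.PosSemidef) (v : Fin n → ℂ) :
    0 ≤ (star v ⬝ᵥ (A⁻¹ *ᵥ v))⁻¹ * (star v ⬝ᵥ v) ^ 2 ∧
    (star v ⬝ᵥ (A⁻¹ *ᵥ v))⁻¹ * (star v ⬝ᵥ v) ^ 2 ≤ star v ⬝ᵥ (A *ᵥ v) := by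
  have hs : 0 ≤ star v ⬝ᵥ (A⁻¹ *ᵥ v) := hA.inv.dotProduct_mulVec_nonneg v
  have hp : 0 ≤ star v ⬝ᵥ v := dotProduct_star_self_nonneg v
  have ha : 0 ≤ star v ⬝ᵥ (A *ᵥ v) := hA.dotProduct_mulVec_nonneg v
  obtain ⟨s, hs0, hs'⟩ := RCLike.nonneg_iff_exists_ofReal.mp hs
  obtain ⟨p, hp0, hp'⟩ := RCLike.nonneg_iff_exists_ofReal.mp hp
  obtain ⟨a, ha0, ha'⟩ := RCLike.nonneg_iff_exists_ofReal.mp ha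
  simp only [RCLike.ofReal_eq_complex_ofReal] at hs' hp' ha'
  rw [← hs', ← hp', ← ha', ← Complex.ofReal_inv, ← Complex.ofReal_pow, ← Complex.ofReal_mul]
  have hnn : 0 ≤ s⁻¹ * p ^ 2 := by positivity
  refine ⟨by exact_mod_cast hnn, ?_⟩
  suffices s⁻¹ * p ^ 2 ≤ a by exact_mod_cast this
  by_cases hd : IsUnit A.det
  swap
  · rw [Matrix.nonsing_inv_apply_not_isUnit A hd] at hs'
    have : s = 0 := by simpa using hs'
    rw [this]; simpa using ha0
  rcases hs0.eq_or_lt with h0 | h0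
  · rw [← h0]; simpa using ha0
  have hw : A *ᵥ (A⁻¹ *ᵥ v) = v := by
    rw [Matrix.mulVec_mulVec, Matrix.mul_nonsing_inv A hd, Matrix.one_mulVec]
  have hw2 : star (A⁻¹ *ᵥ v) ⬝ᵥ (A *ᵥ v) = star v ⬝ᵥ v := by
    rw [Matrix.star_mulVec, hA.inv.isHermitian.eq, Matrix.dotProduct_mulVec,
      Matrix.vecMul_vecMul, Matrix.nonsing_inv_mul A hd, Matrix.vecMul_one]
  have hw3 : star (A⁻¹ *ᵥ v) ⬝ᵥ v = star v ⬝ᵥ (A⁻¹ *ᵥ v) := by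
    rw [Matrix.star_mulVec, hA.inv.isHermitian.eq, Matrix.dotProduct_mulVec]
  have hq := hA.dotProduct_mulVec_nonneg (v - ((p / s : ℝ) : ℂ) • (A⁻¹ *ᵥ v))
  rw [Matrix.mulVec_sub, Matrix.mulVec_smul, hw, star_sub, star_smul] at hq
  simp only [sub_dotProduct, dotProduct_sub, smul_dotProduct, dotProduct_smul, hw2, hw3,
    smul_eq_mul, ← hs', ← hp', ← ha', Complex.star_def, Complex.conj_ofReal] at hq
  have hq' : 0 ≤ a - p / s * p - p / s * (p - p / s * s) := by
    have := (Complex.le_def.mp hq).1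
    exact_mod_cast this
  have e : p / s * s = p := by field_simp
  rw [e] at hq'
  have e2 : s⁻¹ * p ^ 2 = p / s * p := by field_simp
  rw [e2]; linarith

lemma quad_self {n : ℕ} (B : Matrix (Fin n) (Fin n) ℂ) (v : Fin n → ℂ) :
    star v ⬝ᵥ ((Bᴴ * B) *ᵥ v) = ((∑ i, Complex.normSq ((B *ᵥ v) i) : ℝ) : ℂ) := by
  rw [← Matrix.mulVec_mulVec, Matrix.dotProduct_mulVec, ← Matrix.star_mulVec]
  simp [dotProduct, Complex.normSq_eq_conj_mul_self]

noncomputable def gfun (M : ℕ) (κ1 κ2 ξ : ℝ) : ℝ :=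
  (κ1 * (M * (2 - 2 * Real.cos ξ)) +
    κ2 * ((M - 1) * (4 * (2 - 2 * Real.cos ξ)) + (2 - 2 * Real.cos (2 * ξ)))) / (cnorm M) ^ 2

lemma cnorm_pos (M : ℕ) (hM : 5 ≤ M) : 0 < cnorm M := by
  have : (5 : ℝ) ≤ M := by exact_mod_cast hM
  unfold cnorm; positivity

lemma nsq1 (ξ : ℝ) : Complex.normSq (1 - Complex.exp (ξ * Complex.I)) = 2 - 2 * Real.cos ξ := by
  rw [Complex.exp_mul_I, ← Complex.ofReal_cos, ← Complex.ofReal_sin, Complex.normSq_apply]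
  simp only [Complex.sub_re, Complex.sub_im, Complex.add_re, Complex.add_im, Complex.one_re,
    Complex.one_im, Complex.mul_re, Complex.mul_im, Complex.ofReal_re, Complex.ofReal_im,
    Complex.I_re, Complex.I_im]
  nlinarith [Real.sin_sq_add_cos_sq ξ]

lemma quad_Phi (M : ℕ) (hM : 5 ≤ M) (κ1 κ2 ξ : ℝ) :
    star (Phihat M ξ) ⬝ᵥ (Ahat M κ1 κ2 ξ *ᵥ Phihat M ξ) = (gfun M κ1 κ2 ξ : ℂ) := by
  have hc := cnorm_pos M hM
  have hcC : (cnorm M : ℂ) ≠ 0 := by exact_mod_cast hc.ne'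
  set z := Complex.exp (ξ * Complex.I) with hz
  have hs : Complex.exp (-(ξ : ℂ) * Complex.I) = star z := by
    rw [hz, Complex.star_def, ← Complex.exp_conj]; simp
  have hu : z * star z = 1 := exp_unit ξ
  have hn : Complex.normSq z = 1 := by
    have := Complex.mul_conj z
    rw [← Complex.star_def, hu] at this
    exact_mod_cast this.symm
  have hP : ∀ k : Fin M, Phihat M ξ k =
      ((((k : ℕ) : ℂ) + 1) + star z * ((M : ℂ) - 1 - ((k : ℕ) : ℂ))) / (cnorm M : ℂ) := by
    intro k
    simp only [Phihat, hs]
    push_cast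
    ring
  have h1z : Complex.normSq (1 - z) = 2 - 2 * Real.cos ξ := nsq1 ξ
  have h1z' : Complex.normSq (1 - star z) = 2 - 2 * Real.cos ξ := by
    rw [← h1z, ← Complex.normSq_conj (1 - z)]; simp
  have h2z : Complex.normSq (1 - z * z) = 2 - 2 * Real.cos (2 * ξ) := by
    rw [← nsq1, hz, ← Complex.exp_add]; congr 3; push_cast; ring
  have hD1 : ∀ i : Fin M, Complex.normSq (((1 - Sh M z) *ᵥ Phihat M ξ) i) =
      (2 - 2 * Real.cos ξ) / (cnorm M) ^ 2 := by
    intro i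
    rw [Matrix.sub_mulVec, Matrix.one_mulVec, Pi.sub_apply, Sh_mulVec, hP, hP]
    by_cases h : (i : ℕ) + 1 < M
    · simp only [ph, nxt, if_pos h, Nat.cast_add, Nat.cast_one]
      rw [show (((i : ℕ) + 1 + star z * (M - 1 - (i : ℕ))) / (cnorm M : ℂ) -
        1 * (((i : ℕ) + 1 + 1 + star z * (M - 1 - ((i : ℕ) + 1))) / (cnorm M : ℂ)) : ℂ) =
        -((1 - star z) / (cnorm M : ℂ)) by ring]
      rw [Complex.normSq_neg, Complex.normSq_div, h1z', Complex.normSq_ofReal, sq]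
    · have hi : ((i : ℕ) : ℂ) = M - 1 := by
        have : (i : ℕ) + 1 = M := by have := i.2; omega
        rw [eq_sub_iff_add_eq]; exact_mod_cast this
      simp only [ph, nxt, if_neg h, hi, Nat.cast_zero]
      rw [show (((M - 1 + 1 + star z * (M - 1 - (M - 1))) / (cnorm M : ℂ) -
        z * ((0 + 1 + star z * (M - 1 - 0)) / (cnorm M : ℂ))) : ℂ) =
        ((1 - z) / (cnorm M : ℂ)) + (1 - z * star z) * (M - 1) / (cnorm M : ℂ) by ring, hu]
      simp only [sub_self, zero_mul, zero_div, add_zero]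
      rw [Complex.normSq_div, h1z, Complex.normSq_ofReal, sq]
  have hD2 : ∀ i : Fin M, Complex.normSq (((1 - Sh M z * Sh M z) *ᵥ Phihat M ξ) i) =
      4 * (2 - 2 * Real.cos ξ) / (cnorm M) ^ 2 + if i = (⟨M - 2, by omega⟩ : Fin M) then
        ((2 - 2 * Real.cos (2 * ξ)) - 4 * (2 - 2 * Real.cos ξ)) / (cnorm M) ^ 2 else 0 := by
    intro i
    rw [Matrix.sub_mulVec, Matrix.one_mulVec, Pi.sub_apply, ← Matrix.mulVec_mulVec, Sh_mulVec,
      Sh_mulVec, hP, hP]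
    have n2 : Complex.normSq (2 : ℂ) = 4 := by
      rw [show (2 : ℂ) = ((2 : ℝ) : ℂ) by norm_num, Complex.normSq_ofReal]; norm_num
    by_cases h : (i : ℕ) + 2 < M
    · have ha : (i : ℕ) + 1 < M := by omega
      have hb : (i : ℕ) + 1 + 1 < M := by omega
      have hne : i ≠ (⟨M - 2, by omega⟩ : Fin M) := by
        intro h'; rw [h'] at h; simp only at h; omega
      simp only [ph, nxt, if_pos ha, if_pos hb, if_neg hne, Nat.cast_add, Nat.cast_one]
      rw [show (((i : ℕ) + 1 + star z * (M - 1 - (i : ℕ))) / (cnorm M : ℂ) -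
        1 * (1 * (((i : ℕ) + 1 + 1 + 1 + star z * (M - 1 - ((i : ℕ) + 1 + 1))) / (cnorm M : ℂ))) : ℂ) =
        -(2 * (1 - star z) / (cnorm M : ℂ)) by ring]
      rw [Complex.normSq_neg, Complex.normSq_div, Complex.normSq_mul, n2, h1z',
        Complex.normSq_ofReal, sq, add_zero]
    · by_cases h' : (i : ℕ) + 1 < M
      · have hi' : (i : ℕ) + 2 = M := by omega
        have hi : ((i : ℕ) : ℂ) = M - 2 := by rw [eq_sub_iff_add_eq]; exact_mod_cast hi'
        have hb : ¬ ((i : ℕ) + 1 + 1 < M) := by omega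
        have he : i = (⟨M - 2, by omega⟩ : Fin M) := by ext; simp only; omega
        rw [if_pos he]
        simp only [ph, nxt, if_pos h', if_neg hb, hi, Nat.cast_zero]
        rw [show (((M - 2 + 1 + star z * (M - 1 - (M - 2))) / (cnorm M : ℂ) -
          1 * (z * ((0 + 1 + star z * (M - 1 - 0)) / (cnorm M : ℂ)))) : ℂ) =
          (star z * (1 - z * z) / (cnorm M : ℂ)) +
            (1 - z * star z) * (M - 1 - z) / (cnorm M : ℂ) by ring, hu]
        simp only [sub_self, zero_mul, zero_div, add_zero]
        rw [Complex.normSq_div, Complex.normSq_mul, h2z, Complex.star_def, Complex.normSq_conj, hn,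
          Complex.normSq_ofReal]
        ring
      · have hi' : (i : ℕ) + 1 = M := by have := i.2; omega
        have hi : ((i : ℕ) : ℂ) = M - 1 := by rw [eq_sub_iff_add_eq]; exact_mod_cast hi'
        have hb : 0 + 1 < M := by omega
        have hne : i ≠ (⟨M - 2, by omega⟩ : Fin M) := by
          intro h''; rw [h''] at hi'; simp only at hi'; omega
        rw [if_neg hne]
        simp only [ph, nxt, if_neg h', if_pos hb, hi, Nat.cast_zero, Nat.cast_add, Nat.cast_one]
        rw [show (((M - 1 + 1 + star z * (M - 1 - (M - 1))) / (cnorm M : ℂ) -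
          z * (1 * ((0 + 1 + 1 + star z * (M - 1 - (0 + 1))) / (cnorm M : ℂ)))) : ℂ) =
          (2 * (1 - z) / (cnorm M : ℂ)) + (1 - z * star z) * (M - 2) / (cnorm M : ℂ) by ring, hu]
        simp only [sub_self, zero_mul, zero_div, add_zero]
        rw [Complex.normSq_div, Complex.normSq_mul, n2, h1z, Complex.normSq_ofReal, sq]
  rw [Ahat_eq2 M hM κ1 κ2 ξ _ rfl, Matrix.add_mulVec, Matrix.smul_mulVec, Matrix.smul_mulVec,
    dotProduct_add, dotProduct_smul, dotProduct_smul, quad_self, quad_self, ← hz,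
    Finset.sum_congr rfl (fun i _ => hD1 i), Finset.sum_congr rfl (fun i _ => hD2 i),
    Finset.sum_add_distrib, Finset.sum_ite_eq']
  simp only [Finset.sum_const, Finset.card_univ, Fintype.card_fin, nsmul_eq_mul, Finset.mem_univ,
    if_true, smul_eq_mul, gfun]
  norm_cast
  rw [← sub_eq_zero]
  field_simp
  push_cast
  ring

lemma gfun_integral (M : ℕ) (κ1 κ2 : ℝ) :
    ∫ ξ in (0 : ℝ)..(2 * Real.pi), gfun M κ1 κ2 ξ =
      2 * Real.pi * ((2 * M * κ1 + 8 * M * κ2 - 6 * κ2) / (cnorm M) ^ 2) := by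
  have e : ∀ ξ : ℝ, gfun M κ1 κ2 ξ =
      (2 * M * κ1 + 8 * M * κ2 - 6 * κ2) / (cnorm M) ^ 2
      + (-(2 * M * κ1 + 8 * (M - 1) * κ2) / (cnorm M) ^ 2) * Real.cos ξ
      + (-(2 * κ2) / (cnorm M) ^ 2) * Real.cos (2 * ξ) := by
    intro ξ; unfold gfun; ring
  simp_rw [e]
  have i1 : IntervalIntegrable (fun ξ : ℝ => (-(2 * κ2) / (cnorm M) ^ 2) * Real.cos (2 * ξ))
    MeasureTheory.volume 0 (2 * Real.pi) := Continuous.intervalIntegrable (by fun_prop) _ _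
  have i2 : IntervalIntegrable (fun ξ : ℝ => (-(2 * M * κ1 + 8 * (M - 1) * κ2) / (cnorm M) ^ 2) * Real.cos ξ)
    MeasureTheory.volume 0 (2 * Real.pi) := Continuous.intervalIntegrable (by fun_prop) _ _
  have i3 : IntervalIntegrable (fun ξ : ℝ => (2 * M * κ1 + 8 * M * κ2 - 6 * κ2) / (cnorm M) ^ 2)
    MeasureTheory.volume 0 (2 * Real.pi) := Continuous.intervalIntegrable (by fun_prop) _ _
  have c2 : ∫ ξ in (0 : ℝ)..(2 * Real.pi), Real.cos (2 * ξ) = 0 := by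
    rw [intervalIntegral.integral_comp_mul_left (fun x => Real.cos x) (by norm_num), integral_cos]
    have : Real.sin (2 * (2 * Real.pi)) = 0 := by
      have := Real.sin_nat_mul_pi 4
      rw [← this]; congr 1; push_cast; ring
    simp [this]
  rw [intervalIntegral.integral_add (i3.add i2) i1, intervalIntegral.integral_add i3 i2,
    intervalIntegral.integral_const_mul, intervalIntegral.integral_const_mul, c2, integral_cos,
    intervalIntegral.integral_const]
  simp

theorem kernel_diagonal_bound_piecewise_linear (κ1 κ2 : ℝ)
    (h1 : 0 < κ1) (h2 : 0 < κ1 + 4 * κ2)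
    (Θ : ℕ → ℂ)
    (hΘ : ∀ M, Θ M = (1 / (2 * Real.pi) : ℂ) * ∫ ξ in (0 : ℝ)..(2 * Real.pi),
        (star (Phihat M ξ) ⬝ᵥ (Ahat M κ1 κ2 ξ *ᵥ Phihat M ξ) -
          (star (Phihat M ξ) ⬝ᵥ ((Ahat M κ1 κ2 ξ)⁻¹ *ᵥ Phihat M ξ))⁻¹ *
            (star (Phihat M ξ) ⬝ᵥ Phihat M ξ) ^ 2)) :
    (∀ M : ℕ, 5 ≤ M → (Θ M).im = 0 ∧ 0 ≤ (Θ M).re ∧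
        (Θ M).re ≤ (2 * M * κ1 + 8 * M * κ2 - 6 * κ2) / (M * (2 * (M : ℝ) ^ 2 + 1) / 3)) ∧
      (fun M : ℕ => (Θ M).re) =O[Filter.atTop] fun M : ℕ => ((M : ℝ) ^ 2)⁻¹ := by
  have main : ∀ M : ℕ, 5 ≤ M → (Θ M).im = 0 ∧ 0 ≤ (Θ M).re ∧
        (Θ M).re ≤ (2 * M * κ1 + 8 * M * κ2 - 6 * κ2) / (M * (2 * (M : ℝ) ^ 2 + 1) / 3) := by
    intro M hM
    have hex : ∀ ξ : ℝ, ∃ r : ℝ, (0 ≤ r ∧ r ≤ gfun M κ1 κ2 ξ) ∧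
        (star (Phihat M ξ) ⬝ᵥ (Ahat M κ1 κ2 ξ *ᵥ Phihat M ξ) -
          (star (Phihat M ξ) ⬝ᵥ ((Ahat M κ1 κ2 ξ)⁻¹ *ᵥ Phihat M ξ))⁻¹ *
            (star (Phihat M ξ) ⬝ᵥ Phihat M ξ) ^ 2) = (r : ℂ) := by
      intro ξ
      obtain ⟨hb1, hb2⟩ := bracket _ (Ahat_psd M hM κ1 κ2 ξ h1 h2) (Phihat M ξ)
      rw [quad_Phi M hM] at hb2 ⊢
      obtain ⟨r, hr0, hr⟩ := RCLike.nonneg_iff_exists_ofReal.mp hb1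
      simp only [RCLike.ofReal_eq_complex_ofReal] at hr
      rw [← hr] at hb2 ⊢
      have hb3 : r ≤ gfun M κ1 κ2 ξ := by exact_mod_cast hb2
      exact ⟨gfun M κ1 κ2 ξ - r, ⟨by linarith, by linarith⟩, by push_cast; ring⟩
    choose f hf hfe using hex
    have hΘ' : Θ M = ((1 / (2 * Real.pi) * ∫ ξ in (0 : ℝ)..(2 * Real.pi), f ξ : ℝ) : ℂ) := by
      rw [hΘ M]
      simp_rw [hfe]
      rw [intervalIntegral.integral_ofReal]
      push_cast
      rfl
    have hpi : (0 : ℝ) ≤ 2 * Real.pi := by positivity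
    rw [hΘ']
    refine ⟨Complex.ofReal_im _, ?_, ?_⟩
    · rw [Complex.ofReal_re]
      have := intervalIntegral.integral_nonneg_of_forall (μ := MeasureTheory.volume) hpi
        (fun u => (hf u).1)
      positivity
    · rw [Complex.ofReal_re]
      have hle : ∫ ξ in (0 : ℝ)..(2 * Real.pi), f ξ ≤
          ∫ ξ in (0 : ℝ)..(2 * Real.pi), gfun M κ1 κ2 ξ := by
        rw [intervalIntegral.integral_of_le hpi, intervalIntegral.integral_of_le hpi]
        apply MeasureTheory.integral_mono_of_nonneg
        · exact Filter.Eventually.of_forall (fun u => (hf u).1)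
        · have : IntervalIntegrable (gfun M κ1 κ2) MeasureTheory.volume 0 (2 * Real.pi) := by
            apply Continuous.intervalIntegrable
            unfold gfun
            fun_prop
          exact (intervalIntegrable_iff_integrableOn_Ioc_of_le hpi).mp this
        · exact Filter.Eventually.of_forall (fun u => (hf u).2)
      rw [gfun_integral] at hle
      have hc : cnorm M ^ 2 = M * (2 * (M : ℝ) ^ 2 + 1) / 3 := by
        unfold cnorm
        rw [Real.sq_sqrt (by positivity)]; ring
      rw [hc] at hle
      have hp : 0 < 2 * Real.pi := by positivity
      rw [one_div, inv_mul_le_iff₀ hp]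
      exact hle
  refine ⟨main, ?_⟩
  apply Asymptotics.IsBigO.of_bound (3 / 2 * (2 * κ1 + 14 * |κ2|))
  filter_upwards [Filter.eventually_ge_atTop 5] with M hM
  obtain ⟨_, hn, hle⟩ := main M hM
  have hM' : (5 : ℝ) ≤ M := by exact_mod_cast hM
  rw [Real.norm_of_nonneg hn, Real.norm_of_nonneg (by positivity)]
  refine hle.trans ?_
  have hk : (2 * M * κ1 + 8 * M * κ2 - 6 * κ2) ≤ (2 * κ1 + 14 * |κ2|) * M := by
    have a1 := le_abs_self κ2
    have a2 := neg_abs_le κ2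
    have a3 := abs_nonneg κ2
    nlinarith
  rw [div_le_iff₀ (by positivity)]
  refine hk.trans ?_
  have : 3 / 2 * (2 * κ1 + 14 * |κ2|) * ((M : ℝ) ^ 2)⁻¹ * (M * (2 * (M : ℝ) ^ 2 + 1) / 3) =
      (2 * κ1 + 14 * |κ2|) * M + (2 * κ1 + 14 * |κ2|) * (M : ℝ)⁻¹ / 2 := by
    field_simp
  rw [this]
  have : 0 ≤ (2 * κ1 + 14 * |κ2|) * (M : ℝ)⁻¹ / 2 := by positivity
  linarith
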